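/- arXiv:0806.0709 — 4 statements merged into one kernel-verified Lean document; each statement's English description precedes it below -/
import Mathlib

section
/- Let X and D be smooth vector fields on ℝⁿ admitting global flows φ and ψ respectively, and let ζ ∈ ℝ. Then X is homogeneous of degree ζ with respect to D, i.e. [D,X](x) = ζ·X(x) for all x ∈ ℝⁿ, if and only if for all s, t ∈ ℝ and all x ∈ ℝⁿ: φ(t, ψ(s, x)) = ψ(s, φ(e^{ζs}·t, x)). -/
/-!
Let `φ` and `ψ` be the flows of `X` and `D`. Commutation says that `P(s, τ) = ψ_s (φ_τ x)` satisfies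
`∂P/∂τ = e^{-ζs} X(P)`: each `ψ_s` maps the orbits of `X` to orbits of `X` run at speed `e^{-ζs}`.
If `[D, X] = ζ X`, then `u(s) = e^{-ζs} X(ψ_s y)` solves the variational equation of `D` along
`s ↦ ψ_s y`, so `u(s)` is the image of `X(y)` under the derivative of `ψ_s`; for `y = φ_τ x` this is
the equation for `∂P/∂τ`. Conversely, this equation together with `∂P/∂s = D(P)` expresses both
partial derivatives of `P` as `C¹` functions of `s` and `P`, and the equality of the mixed second
partial derivatives at `(0, 0)` is the bracket identity at `x`.
-/

open Set Filter Metric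
open scoped Topology

variable {E F : Type*} [NormedAddCommGroup E] [NormedSpace ℝ E]
  [NormedAddCommGroup F] [NormedSpace ℝ F]

section UniformLinearization

variable {f : E → F} {K : Set E}

theorem exists_ball_norm_sub_sub_fderiv_le (hf : ContDiff ℝ 1 f) (hK : IsCompact K)
    {η : ℝ} (hη : 0 < η) :
    ∃ δ > 0, ∀ p ∈ K, ∀ a ∈ ball p δ, ∀ b ∈ ball p δ,
      ‖f a - f b - fderiv ℝ f p (a - b)‖ ≤ η * ‖a - b‖ := by
  have hf' : Continuous (fderiv ℝ f) := hf.continuous_fderiv one_ne_zero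
  obtain ⟨δ, hδ, hclose⟩ := mem_uniformity_dist.1 <|
    hK.uniformContinuousAt_of_continuousAt _ (fun p _ ↦ hf'.continuousAt) (dist_mem_uniformity hη)
  refine ⟨δ, hδ, fun p hp a ha b hb ↦ ?_⟩
  refine (convex_ball p δ).norm_image_sub_le_of_norm_fderiv_le' (𝕜 := ℝ)
    (fun q _ ↦ hf.differentiable one_ne_zero q) (fun q hq ↦ ?_) hb ha
  rw [← dist_eq_norm, dist_comm]
  exact (hclose (mem_ball'.1 hq) hp).le

theorem exists_ball_norm_sub_le (hf : ContDiff ℝ 1 f) (hK : IsCompact K) :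
    ∃ δ > 0, ∃ L, 0 ≤ L ∧ ∀ p ∈ K, ∀ a ∈ ball p δ, ∀ b ∈ ball p δ,
      ‖f a - f b‖ ≤ L * ‖a - b‖ := by
  obtain ⟨δ, hδ, hlin⟩ := exists_ball_norm_sub_sub_fderiv_le hf hK one_pos
  obtain ⟨M, hM⟩ := hK.exists_bound_of_continuousOn
    (hf.continuous_fderiv one_ne_zero).continuousOn
  refine ⟨δ, hδ, max M 0 + 1, by positivity, fun p hp a ha b hb ↦ ?_⟩
  calc ‖f a - f b‖
      ≤ ‖f a - f b - fderiv ℝ f p (a - b)‖ + ‖fderiv ℝ f p (a - b)‖ := norm_le_norm_sub_add _ _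
    _ ≤ 1 * ‖a - b‖ + max M 0 * ‖a - b‖ := by
        gcongr
        · exact hlin p hp a ha b hb
        · exact (fderiv ℝ f p).le_of_opNorm_le ((hM p hp).trans (le_max_left _ _)) _
    _ = (max M 0 + 1) * ‖a - b‖ := by ring

theorem eventually_forall_norm_smul_lt {α : Type*} [TopologicalSpace α] {I : Set α}
    (hI : IsCompact I) {u : α → E} (hu : ContinuousOn u I) {δ : ℝ} (hδ : 0 < δ) :
    ∀ᶠ k : ℝ in 𝓝 0, ∀ s ∈ I, ‖k • u s‖ < δ := by
  obtain ⟨M, hM⟩ := hI.exists_bound_of_continuousOn hu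
  have hsmall : ∀ᶠ k : ℝ in 𝓝 0, ‖k‖ * M < δ :=
    (by fun_prop : Continuous fun k : ℝ ↦ ‖k‖ * M).continuousAt.eventually_lt_const (by simpa)
  filter_upwards [hsmall] with k hk s hs
  calc ‖k • u s‖ = ‖k‖ * ‖u s‖ := norm_smul _ _
    _ ≤ ‖k‖ * M := by gcongr; exact hM s hs
    _ < δ := hk

theorem eventually_forall_norm_sub_sub_smul_fderiv_le {α : Type*} [TopologicalSpace α]
    (hf : ContDiff ℝ 1 f) {I : Set α} (hI : IsCompact I) {c u : α → E}
    (hc : ContinuousOn c I) (hu : ContinuousOn u I) {η : ℝ} (hη : 0 < η) :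
    ∀ᶠ k : ℝ in 𝓝 0, ∀ s ∈ I,
      ‖f (c s + k • u s) - f (c s) - k • fderiv ℝ f (c s) (u s)‖ ≤ η * ‖k‖ := by
  obtain ⟨M, hM⟩ := hI.exists_bound_of_continuousOn hu
  have hM' : 0 < max M 1 := by positivity
  obtain ⟨δ, hδ, hlin⟩ :=
    exists_ball_norm_sub_sub_fderiv_le hf (hI.image_of_continuousOn hc) (div_pos hη hM')
  filter_upwards [eventually_forall_norm_smul_lt hI hu hδ] with k hk s hs
  have hcs := hlin (c s) (mem_image_of_mem c hs) (c s + k • u s) (by simpa using hk s hs)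
    (c s) (mem_ball_self hδ)
  rw [add_sub_cancel_left, map_smul] at hcs
  calc ‖f (c s + k • u s) - f (c s) - k • fderiv ℝ f (c s) (u s)‖
      ≤ η / max M 1 * (‖k‖ * ‖u s‖) := by rwa [norm_smul] at hcs
    _ ≤ η / max M 1 * (‖k‖ * max M 1) := by
        gcongr
        exact (hM s hs).trans (le_max_left _ _)
    _ = η * ‖k‖ := by field_simp

end UniformLinearization

section ApproximateTrajectories

variable {D : E → E} {y y' z : ℝ → E} {L r η S : ℝ}

theorem norm_sub_le_of_approx_trajectory_of_nonneg (hS : 0 ≤ S) (hL : 0 ≤ L) (hη : 0 < η)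
    (hr : η * Real.exp ((L + 2) * S) ≤ r)
    (hlip : ∀ s ∈ Icc 0 S, ∀ p ∈ closedBall (y s) r, ‖D p - D (y s)‖ ≤ L * ‖p - y s‖)
    (hy : ∀ s ∈ Icc 0 S, HasDerivAt y (y' s) s)
    (hy' : ∀ s ∈ Icc 0 S, ‖D (y s) - y' s‖ ≤ η)
    (hz : ∀ s ∈ Icc 0 S, HasDerivAt z (D (z s)) s) (h0 : ‖z 0 - y 0‖ ≤ η) :
    ‖z S - y S‖ ≤ η * Real.exp ((L + 2) * S) := by
  have hderiv : ∀ s ∈ Icc 0 S, HasDerivAt (fun s ↦ z s - y s) (D (z s) - y' s) s :=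
    fun s hs ↦ (hz s hs).sub (hy s hs)
  have hbarrier (s : ℝ) : HasDerivAt (fun s ↦ η * Real.exp ((L + 2) * s))
      (η * (Real.exp ((L + 2) * s) * (L + 2))) s :=
    (((hasDerivAt_id s).const_mul (L + 2)).exp.const_mul η).congr_deriv (by simp)
  -- The exponent `L + 2 > L + 1` makes the barrier grow strictly faster than `‖z - y‖` at contact.
  refine image_norm_le_of_norm_deriv_right_lt_deriv_boundary
    (fun s hs ↦ (hderiv s hs).continuousAt.continuousWithinAt)
    (fun s hs ↦ (hderiv s (Ico_subset_Icc_self hs)).hasDerivWithinAt)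
    (by simpa using h0) hbarrier (fun s hs' htouch ↦ ?_) (right_mem_Icc.2 hS)
  have hs : s ∈ Icc 0 S := Ico_subset_Icc_self hs'
  set B := η * Real.exp ((L + 2) * s) with hB
  have hηB : η ≤ B :=
    le_mul_of_one_le_right hη.le (Real.one_le_exp (mul_nonneg (by positivity) hs.1))
  have hBr : B ≤ r := by
    refine le_trans ?_ hr
    rw [hB]
    gcongr
    exact hs.2
  calc ‖D (z s) - y' s‖ ≤ ‖D (z s) - D (y s)‖ + ‖D (y s) - y' s‖ :=
        norm_sub_le_norm_sub_add_norm_sub _ _ _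
    _ ≤ L * ‖z s - y s‖ + η := by
        gcongr
        · exact hlip s hs _ (by rw [mem_closedBall, dist_eq_norm, htouch]; exact hBr)
        · exact hy' s hs
    _ = L * B + η := by rw [htouch]
    _ < η * (Real.exp ((L + 2) * s) * (L + 2)) := by linarith

theorem norm_sub_le_of_approx_trajectory (hL : 0 ≤ L) (hη : 0 < η)
    (hr : η * Real.exp ((L + 2) * |S|) ≤ r)
    (hlip : ∀ s ∈ uIcc 0 S, ∀ p ∈ closedBall (y s) r, ‖D p - D (y s)‖ ≤ L * ‖p - y s‖)
    (hy : ∀ s ∈ uIcc 0 S, HasDerivAt y (y' s) s)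
    (hy' : ∀ s ∈ uIcc 0 S, ‖D (y s) - y' s‖ ≤ η)
    (hz : ∀ s ∈ uIcc 0 S, HasDerivAt z (D (z s)) s) (h0 : ‖z 0 - y 0‖ ≤ η) :
    ‖z S - y S‖ ≤ η * Real.exp ((L + 2) * |S|) := by
  rcases le_total 0 S with hS | hS
  · rw [uIcc_of_le hS] at *
    rw [abs_of_nonneg hS] at *
    exact norm_sub_le_of_approx_trajectory_of_nonneg hS hL hη hr hlip hy hy' hz h0
  · have hmem : ∀ s ∈ Icc 0 (-S), -s ∈ uIcc 0 S := fun s hs ↦ by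
      rw [uIcc_of_ge hS]
      exact ⟨by linarith [hs.2], by linarith [hs.1]⟩
    rw [abs_of_nonpos hS] at *
    simpa using norm_sub_le_of_approx_trajectory_of_nonneg (D := fun x ↦ -D x)
      (y := fun s ↦ y (-s)) (y' := fun s ↦ -y' (-s)) (z := fun s ↦ z (-s))
      (neg_nonneg.2 hS) hL hη hr
      (fun s hs p hp ↦ by
        rw [neg_sub_neg, norm_sub_rev]
        exact hlip _ (hmem s hs) p hp)
      (fun s hs ↦ by simpa [Function.comp_def] using (hy _ (hmem s hs)).scomp s (hasDerivAt_neg s))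
      (fun s hs ↦ by
        rw [neg_sub_neg, norm_sub_rev]
        exact hy' _ (hmem s hs))
      (fun s hs ↦ by simpa [Function.comp_def] using (hz _ (hmem s hs)).scomp s (hasDerivAt_neg s))
      (by simpa using h0)

theorem norm_sub_sub_smul_le_of_linearization {c u : ℝ → E} {k δ : ℝ} (hL : 0 ≤ L) (hη : 0 < η)
    (hδ : 0 < δ) (hηδ : η * Real.exp ((L + 2) * |S|) ≤ δ / 2)
    (hlip : ∀ s ∈ uIcc 0 S, ∀ a ∈ ball (c s) δ, ∀ b ∈ ball (c s) δ, ‖D a - D b‖ ≤ L * ‖a - b‖)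
    (hc : ∀ s ∈ uIcc 0 S, HasDerivAt c (D (c s)) s)
    (hu : ∀ s ∈ uIcc 0 S, HasDerivAt u (fderiv ℝ D (c s) (u s)) s)
    (hsmall : ∀ s ∈ uIcc 0 S, ‖k • u s‖ < δ / 2)
    (htaylor : ∀ s ∈ uIcc 0 S,
      ‖D (c s + k • u s) - D (c s) - k • fderiv ℝ D (c s) (u s)‖ ≤ η)
    (hz : ∀ s ∈ uIcc 0 S, HasDerivAt z (D (z s)) s) (h0 : ‖z 0 - c 0 - k • u 0‖ ≤ η) :
    ‖z S - c S - k • u S‖ ≤ η * Real.exp ((L + 2) * |S|) := by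
  simp only [sub_sub] at htaylor h0 ⊢
  refine norm_sub_le_of_approx_trajectory (y := fun s ↦ c s + k • u s) hL hη hηδ
    (fun s hs p hp ↦ ?_) (fun s hs ↦ (hc s hs).add ((hu s hs).const_smul k)) htaylor hz h0
  have hball : c s + k • u s ∈ ball (c s) (δ / 2) := by simpa using hsmall s hs
  refine hlip s hs p ?_ _ (ball_subset_ball (half_le_self hδ.le) hball)
  calc dist p (c s) ≤ dist p (c s + k • u s) + dist (c s + k • u s) (c s) := dist_triangle _ _ _
    _ < δ / 2 + δ / 2 := add_lt_add_of_le_of_lt hp hball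
    _ = δ := add_halves δ

end ApproximateTrajectories

theorem eq_of_isIntegralCurve_of_locallyLipschitz {X : E → E} (hX : LocallyLipschitz X)
    {γ₁ γ₂ : ℝ → E} (h₁ : IsIntegralCurve γ₁ fun _ ↦ X) (h₂ : IsIntegralCurve γ₂ fun _ ↦ X)
    {t₀ : ℝ} (h : γ₁ t₀ = γ₂ t₀) : γ₁ = γ₂ := by
  ext t
  set I := Icc (min t₀ t - 1) (max t₀ t + 1)
  have hK : IsCompact (γ₁ '' I ∪ γ₂ '' I) :=
    (isCompact_Icc.image h₁.continuous).union (isCompact_Icc.image h₂.continuous)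
  obtain ⟨L, hL⟩ := hX.locallyLipschitzOn.exists_lipschitzOnWith_of_compact hK
  refine ODE_solution_unique_of_mem_Ioo (a := min t₀ t - 1) (b := max t₀ t + 1)
    (fun _ _ ↦ hL) (t₀ := t₀) (by grind)
    (fun s hs ↦ ⟨h₁ s, .inl (mem_image_of_mem _ (Ioo_subset_Icc_self hs))⟩)
    (fun s hs ↦ ⟨h₂ s, .inr (mem_image_of_mem _ (Ioo_subset_Icc_self hs))⟩) h (by grind)

/-- `φ` is the flow of the vector field `X`, defined for all times. -/
structure IsGlobalFlow (X : E → E) (φ : ℝ → E → E) : Prop where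
  map_zero : ∀ x, φ 0 x = x
  isIntegralCurve : ∀ x, IsIntegralCurve (φ · x) fun _ ↦ X

namespace IsGlobalFlow

variable {X D : E → E} {φ ψ : ℝ → E → E}

theorem eventually_forall_norm_sub_le (hφ : IsGlobalFlow X φ) (hX : ContDiff ℝ 1 X) (x : E)
    (S : ℝ) {ε : ℝ} (hε : 0 < ε) :
    ∀ᶠ x' in 𝓝 x, ∀ s ∈ Icc (-S) S, ‖φ s x' - φ s x‖ ≤ ε := by
  obtain ⟨δ, hδ, L, hL, hlip⟩ := exists_ball_norm_sub_le hX
    ((isCompact_Icc (a := -S) (b := S)).image (hφ.isIntegralCurve x).continuous)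
  set C := Real.exp ((L + 2) * S)
  set r := min ε (δ / 2)
  have hr : 0 < r := by positivity
  filter_upwards [closedBall_mem_nhds x (show 0 < r / C by positivity)] with x' hx' s hs
  have hbound : r / C * Real.exp ((L + 2) * |s|) ≤ r :=
    calc r / C * Real.exp ((L + 2) * |s|) ≤ r / C * Real.exp ((L + 2) * S) := by
          gcongr
          exact abs_le.2 hs
      _ = r := div_mul_cancel₀ r (Real.exp_ne_zero _)
  refine (norm_sub_le_of_approx_trajectory hL (by positivity) hbound (fun σ hσ p hp ↦ ?_)
    (fun σ _ ↦ hφ.isIntegralCurve x σ) (fun σ _ ↦ ?_) (fun σ _ ↦ hφ.isIntegralCurve x' σ)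
    ?_).trans (hbound.trans (min_le_left _ _))
  · have hσS : σ ∈ Icc (-S) S := by
      have := uIcc_subset_Icc (show (0 : ℝ) ∈ Icc (-S) S by grind) hs
      exact this hσ
    have hrδ : r < δ := (min_le_right _ _).trans_lt (half_lt_self hδ)
    exact hlip _ (mem_image_of_mem _ hσS) p (closedBall_subset_ball hrδ hp) _ (mem_ball_self hδ)
  · simpa using (div_pos hr (Real.exp_pos _)).le
  · simpa [hφ.map_zero, dist_eq_norm] using hx'

theorem continuous_uncurry (hφ : IsGlobalFlow X φ) (hX : ContDiff ℝ 1 X) : Continuous ↿φ := by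
  refine continuous_iff_continuousAt.2 fun ⟨s, x⟩ ↦ ?_
  refine tendsto_comp_of_locally_uniform_limit (p := 𝓝 (s, x)) (g := Prod.fst)
    (F := fun q σ ↦ φ σ q.2) (hφ.isIntegralCurve x).continuous.continuousAt
    continuousAt_fst fun u hu ↦ ?_
  obtain ⟨ε, hε, hεu⟩ := mem_uniformity_dist.1 hu
  refine ⟨Icc (-(|s| + 1)) (|s| + 1), Icc_mem_nhds (by grind) (by grind), ?_⟩
  filter_upwards [continuousAt_snd.eventually
    (hφ.eventually_forall_norm_sub_le hX x (|s| + 1) (half_pos hε))] with q hq σ hσ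
  refine hεu ?_
  rw [dist_comm, dist_eq_norm]
  exact (hq σ hσ).trans_lt (half_lt_self hε)

theorem hasDerivAt_comp_of_variational (hψ : IsGlobalFlow D ψ) (hD : ContDiff ℝ 1 D)
    {γ u : ℝ → E} {τ₀ : ℝ} (hγ : HasDerivAt γ (u 0) τ₀)
    (hu : IsIntegralCurve u fun s ↦ fderiv ℝ D (ψ s (γ τ₀))) (S : ℝ) :
    HasDerivAt (fun τ ↦ ψ S (γ τ)) (u S) τ₀ := by
  have hc := hψ.isIntegralCurve (γ τ₀)
  obtain ⟨δ, hδ, L, hL, hlip⟩ := exists_ball_norm_sub_le hD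
    ((isCompact_uIcc (a := 0) (b := S)).image hc.continuous)
  set C := Real.exp ((L + 2) * |S|)
  have hC : 0 < C := Real.exp_pos _
  rw [hasDerivAt_iff_isLittleO, Asymptotics.isLittleO_iff] at hγ ⊢
  intro ε hε
  have hη : 0 < ε / C := div_pos hε hC
  have hk0 : Tendsto (fun τ ↦ τ - τ₀) (𝓝 τ₀) (𝓝 0) := by
    simpa using (continuous_sub_right τ₀).tendsto τ₀
  have hδC : ∀ᶠ k : ℝ in 𝓝 0, ε / C * ‖k‖ * C < δ / 2 :=
    (by fun_prop : Continuous fun k : ℝ ↦ ε / C * ‖k‖ * C).continuousAt.eventually_lt_const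
      (by simpa)
  filter_upwards [hγ hη, hk0.eventually hδC,
    hk0.eventually (eventually_forall_norm_sub_sub_smul_fderiv_le hD (isCompact_uIcc (b := S))
      hc.continuous.continuousOn hu.continuous.continuousOn hη),
    hk0.eventually (eventually_forall_norm_smul_lt isCompact_uIcc
      hu.continuous.continuousOn (half_pos hδ))] with τ hinit hτ htaylor hsmall
  rcases eq_or_ne τ τ₀ with rfl | hne
  · simp
  have hk : 0 < ‖τ - τ₀‖ := norm_pos_iff.2 (sub_ne_zero.2 hne)
  calc ‖ψ S (γ τ) - ψ S (γ τ₀) - (τ - τ₀) • u S‖ ≤ ε / C * ‖τ - τ₀‖ * C :=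
        norm_sub_sub_smul_le_of_linearization (z := fun s ↦ ψ s (γ τ)) hL (mul_pos hη hk) hδ hτ.le
          (fun s hs ↦ hlip _ (mem_image_of_mem _ hs)) (fun s _ ↦ hc s) (fun s _ ↦ hu s) hsmall
          htaylor (fun s _ ↦ hψ.isIntegralCurve (γ τ) s) (by simpa [hψ.map_zero] using hinit)
    _ = ε * ‖τ - τ₀‖ := by field_simp

theorem forall_apply_comm_iff (hφ : IsGlobalFlow X φ) (hX : LocallyLipschitz X) {g : E → E}
    {c : ℝ} (hc : c ≠ 0) :
    (∀ t x, φ t (g x) = g (φ (c * t) x)) ↔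
      ∀ x, IsIntegralCurve (fun τ ↦ g (φ τ x)) fun _ ↦ c⁻¹ • X := by
  constructor
  · intro hcomm x
    have hreparam : (fun τ ↦ g (φ τ x)) = (φ · (g x)) ∘ (· * c⁻¹) := by
      ext τ
      simp [hcomm, mul_comm τ, mul_inv_cancel_left₀ hc]
    rw [hreparam]
    exact (hφ.isIntegralCurve (g x)).comp_mul c⁻¹
  · intro hg t x
    have hcurve : IsIntegralCurve (fun t ↦ g (φ (c * t) x)) fun _ ↦ X := by
      convert (hg x).comp_mul c using 1
      · ext t
        simp [mul_comm c]
      · ext t p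
        simp [smul_smul, hc]
    exact congrFun (eq_of_isIntegralCurve_of_locallyLipschitz hX (hφ.isIntegralCurve (g x)) hcurve
      (t₀ := 0) (by simp [hφ.map_zero])) t

end IsGlobalFlow

section MixedPartials

open ContinuousLinearMap

variable {P A B : ℝ → ℝ → F}

theorem hasFDerivAt_uncurry_of_continuous_partials
    (hA : ∀ s t, HasDerivAt (P · t) (A s t) s) (hB : ∀ s t, HasDerivAt (P s) (B s t) t)
    (hAc : Continuous ↿A) (hBc : Continuous ↿B) (q : ℝ × ℝ) :
    HasFDerivAt ↿P (smulRightL ℝ (ℝ × ℝ) F (fst ℝ ℝ ℝ) (↿A q) +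
      smulRightL ℝ (ℝ × ℝ) F (snd ℝ ℝ ℝ) (↿B q)) q := by
  have hcont {f : ℝ → ℝ → F} (hf : Continuous ↿f) :
      ContinuousAt ↿(fun s t ↦ toSpanSingleton ℝ (f s t)) q :=
    (toSpanSingletonCLE.continuous.comp hf).continuousAt
  refine (hasStrictFDerivAt_uncurry_coprod (𝕜 := ℝ) (f := P)
    (.of_forall fun v ↦ (hA v.1 v.2).hasFDerivAt) (.of_forall fun v ↦ (hB v.1 v.2).hasFDerivAt)
    (hcont hAc) (hcont hBc)).hasFDerivAt.congr_fderiv ?_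
  ext <;> simp [Function.HasUncurry.uncurry]

theorem mixed_partials_eq
    (hA : ∀ s t, HasDerivAt (P · t) (A s t) s) (hB : ∀ s t, HasDerivAt (P s) (B s t) t)
    (hAc : Continuous ↿A) (hBc : Continuous ↿B) {s t : ℝ} {a b : F}
    (hAd : DifferentiableAt ℝ ↿A (s, t)) (hBd : DifferentiableAt ℝ ↿B (s, t))
    (ha : HasDerivAt (A s) a t) (hb : HasDerivAt (B · t) b s) : a = b := by
  have hsecond := ((smulRightL ℝ (ℝ × ℝ) F (fst ℝ ℝ ℝ)).hasFDerivAt.comp (s, t)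
    hAd.hasFDerivAt).add
      ((smulRightL ℝ (ℝ × ℝ) F (snd ℝ ℝ ℝ)).hasFDerivAt.comp (s, t) hBd.hasFDerivAt)
  have hsymm := second_derivative_symmetric
    (hasFDerivAt_uncurry_of_continuous_partials hA hB hAc hBc) hsecond (0, 1) (1, 0)
  have ha' : HasDerivAt (A s) (fderiv ℝ ↿A (s, t) (0, 1)) t :=
    hAd.hasFDerivAt.comp_hasDerivAt t ((hasDerivAt_const t s).prodMk (hasDerivAt_id t))
  have hb' : HasDerivAt (B · t) (fderiv ℝ ↿B (s, t) (1, 0)) s :=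
    hBd.hasFDerivAt.comp_hasDerivAt (f := fun s ↦ (s, t)) s
      ((hasDerivAt_id s).prodMk (hasDerivAt_const s t))
  rw [ha.unique ha', hb.unique hb']
  simpa using hsymm

end MixedPartials

theorem hasDerivAt_exp_neg_mul (ζ σ : ℝ) :
    HasDerivAt (fun σ ↦ Real.exp (-(ζ * σ))) (-(ζ * Real.exp (-(ζ * σ)))) σ :=
  ((hasDerivAt_id σ).const_mul ζ).fun_neg.exp.congr_deriv (by simp; ring)

namespace IsGlobalFlow

open VectorField

variable {X D : E → E} {φ ψ : ℝ → E → E} {ζ : ℝ}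

theorem isIntegralCurve_comp_of_lieBracket_eq_smul
    (hφ : IsGlobalFlow X φ) (hψ : IsGlobalFlow D ψ) (hX : Differentiable ℝ X) (hD : ContDiff ℝ 1 D)
    (hbracket : ∀ x, lieBracket ℝ D X x = ζ • X x) (s : ℝ) (x : E) :
    IsIntegralCurve (fun τ ↦ ψ s (φ τ x)) fun _ ↦ (Real.exp (ζ * s))⁻¹ • X := by
  intro τ
  let u (σ : ℝ) : E := Real.exp (-(ζ * σ)) • X (ψ σ (φ τ x))
  have hu : IsIntegralCurve u fun σ ↦ fderiv ℝ D (ψ σ (φ τ x)) := by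
    intro σ
    set p := ψ σ (φ τ x) with hp
    have hDX : fderiv ℝ X p (D p) = ζ • X p + fderiv ℝ D p (X p) :=
      sub_eq_iff_eq_add.1 (hbracket p)
    have hXp : HasDerivAt (fun σ ↦ X (ψ σ (φ τ x))) (fderiv ℝ X p (D p)) σ :=
      (hX p).hasFDerivAt.comp_hasDerivAt σ (hψ.isIntegralCurve (φ τ x) σ)
    refine (hasDerivAt_exp_neg_mul ζ σ).smul hXp |>.congr_deriv ?_
    simp only [u, ← hp, hDX, map_smul]
    module
  have hγ : HasDerivAt (φ · x) (u 0) τ := by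
    simpa [u, hψ.map_zero] using hφ.isIntegralCurve x τ
  simpa [u, Real.exp_neg] using hψ.hasDerivAt_comp_of_variational hD hγ hu s

theorem lieBracket_eq_smul_of_isIntegralCurve_comp (hφ : IsGlobalFlow X φ) (hψ : IsGlobalFlow D ψ)
    (hX : ContDiff ℝ 1 X) (hD : ContDiff ℝ 1 D)
    (hscale : ∀ s x, IsIntegralCurve (fun τ ↦ ψ s (φ τ x)) fun _ ↦ (Real.exp (ζ * s))⁻¹ • X)
    (x : E) : lieBracket ℝ D X x = ζ • X x := by
  let P (s τ : ℝ) : E := ψ s (φ τ x)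
  let A (s τ : ℝ) : E := D (P s τ)
  let B (s τ : ℝ) : E := Real.exp (-(ζ * s)) • X (P s τ)
  have hA (s τ : ℝ) : HasDerivAt (P · τ) (A s τ) s := hψ.isIntegralCurve (φ τ x) s
  have hB (s τ : ℝ) : HasDerivAt (P s) (B s τ) τ := by
    simpa [B, Real.exp_neg] using hscale s x τ
  have hPc : Continuous ↿P := (hψ.continuous_uncurry hD).comp
    (continuous_fst.prodMk ((hφ.isIntegralCurve x).continuous.comp continuous_snd))
  have hAc : Continuous ↿A := hD.continuous.comp hPc
  have hexp : ContDiff ℝ 1 fun q : ℝ × ℝ ↦ Real.exp (-(ζ * q.1)) := by fun_prop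
  have hBc : Continuous ↿B := hexp.continuous.smul (hX.continuous.comp hPc)
  have hPd : DifferentiableAt ℝ ↿P (0, 0) :=
    (hasFDerivAt_uncurry_of_continuous_partials hA hB hAc hBc (0, 0)).differentiableAt
  have hXd : Differentiable ℝ X := hX.differentiable one_ne_zero
  have hDd : Differentiable ℝ D := hD.differentiable one_ne_zero
  have hP00 : P 0 0 = x := by simp [P, hφ.map_zero, hψ.map_zero]
  have hA' : HasDerivAt (A 0) (fderiv ℝ D (P 0 0) (B 0 0)) 0 :=
    (hDd _).hasFDerivAt.comp_hasDerivAt 0 (hB 0 0)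
  have hB' := (hasDerivAt_exp_neg_mul ζ 0).smul
    ((hXd _).hasFDerivAt.comp_hasDerivAt 0 (hA 0 0))
  have hsymm := mixed_partials_eq hA hB hAc hBc (hDd.differentiableAt.comp (0, 0) hPd)
    ((hexp.differentiable one_ne_zero _).smul (hXd.differentiableAt.comp (0, 0) hPd)) hA' hB'
  have hbracket : fderiv ℝ D x (X x) = fderiv ℝ X x (D x) + -(ζ • X x) := by
    simpa [A, B, hP00] using hsymm
  simp only [lieBracket, hbracket]
  module

theorem lieBracket_eq_smul_iff_isIntegralCurve_comp (hφ : IsGlobalFlow X φ) (hψ : IsGlobalFlow D ψ)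
    (hX : ContDiff ℝ 1 X) (hD : ContDiff ℝ 1 D) :
    (∀ x, lieBracket ℝ D X x = ζ • X x) ↔
      ∀ s x, IsIntegralCurve (fun τ ↦ ψ s (φ τ x)) fun _ ↦ (Real.exp (ζ * s))⁻¹ • X :=
  ⟨hφ.isIntegralCurve_comp_of_lieBracket_eq_smul hψ (hX.differentiable one_ne_zero) hD,
    hφ.lieBracket_eq_smul_of_isIntegralCurve_comp hψ hX hD⟩

end IsGlobalFlow

theorem homogeneous_iff_flow_commutation_general {X D : E → E} {φ ψ : ℝ → E → E}
    (hX : ContDiff ℝ 1 X) (hD : ContDiff ℝ 1 D) (ζ : ℝ)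
    (hφ : IsGlobalFlow X φ) (hψ : IsGlobalFlow D ψ) :
    (∀ x, VectorField.lieBracket ℝ D X x = ζ • X x) ↔
      ∀ s t x, φ t (ψ s x) = ψ s (φ (Real.exp (ζ * s) * t) x) :=
  (hφ.lieBracket_eq_smul_iff_isIntegralCurve_comp hψ hX hD).trans <| forall_congr' fun s ↦
    (hφ.forall_apply_comm_iff hX.locallyLipschitz (Real.exp_ne_zero (ζ * s))).symm

/-- A smooth vector field `X` with global flow `φ` is homogeneous of
degree `ζ` with respect to a smooth vector field `D` with global flow `ψ`
(`[D,X] = ζ X`) if and only if `φ_t ∘ ψ_s = ψ_s ∘ φ_{e^{ζ s} t}`. -/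
theorem homogeneous_iff_flow_commutation
    (n : ℕ) (X D : (Fin n → ℝ) → (Fin n → ℝ))
    (hX : ContDiff ℝ (⊤ : ℕ∞) X) (hD : ContDiff ℝ (⊤ : ℕ∞) D) (ζ : ℝ)
    (φ ψ : ℝ → (Fin n → ℝ) → (Fin n → ℝ))
    (hφ0 : ∀ x, φ 0 x = x)
    (hφ : ∀ (t : ℝ) (x : Fin n → ℝ), HasDerivAt (fun τ => φ τ x) (X (φ t x)) t)
    (hψ0 : ∀ x, ψ 0 x = x)
    (hψ : ∀ (s : ℝ) (x : Fin n → ℝ), HasDerivAt (fun τ => ψ τ x) (D (ψ s x)) s) :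
    (∀ x, fderiv ℝ X x (D x) - fderiv ℝ D x (X x) = ζ • X x) ↔
      (∀ (s t : ℝ) (x : Fin n → ℝ),
        φ t (ψ s x) = ψ s (φ (Real.exp (ζ * s) * t) x)) :=
  homogeneous_iff_flow_commutation_general (hX.of_le (by exact_mod_cast le_top))
    (hD.of_le (by exact_mod_cast le_top)) ζ ⟨hφ0, fun x t ↦ hφ t x⟩ ⟨hψ0, fun x s ↦ hψ s x⟩
end

section
/- Let X and D be smooth vector fields on ℝⁿ admitting global flows φ and ψ respectively, let ξ : ℝⁿ → ℝ be a smooth function, and suppose [D,X](x) = ξ(x)·X(x) for all x ∈ ℝⁿ. Define ρ(s,x) := ∫₀^s ξ(ψ(τ,x)) dτ. Then for all s ∈ ℝ and all x ∈ ℝⁿ, the pullback of X under ψ_s scales exponentially: X(ψ(s,x)) = e^{ρ(s,x)} · D_x ψ_s(x)[X(x)], where D_x ψ_s(x) denotes the Fréchet derivative of the map y ↦ ψ(s,y) at x. -/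
/-!
Differentiating the flow equation of `D` in the initial condition gives the variational equation
`∂ₜ (Dψ_t) = DD(ψ_t) ∘ Dψ_t`. The bracket relation says precisely that
`t ↦ e^{-ρ(t,x)} X(ψ(t,x))` solves the same linear equation along the orbit of `x` as
`t ↦ D_x ψ_t(x)[X(x)]`: the term `-ξ X` coming from the exponential cancels the defect `ξ X` of
`[D, X]`. Both curves start at `X x`, so they coincide.

The differentiability of `ψ_t` is obtained by solving the linear equation first (by its Dyson
series) and then comparing its solution with `ψ_t y - ψ_t x` through Grönwall's inequality.
-/

open Set Metric Topology VectorField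

lemma exists_bound_of_abs_le {F : Type*} [SeminormedAddGroup F] {f : ℝ → F} (hf : Continuous f)
    (T : ℝ) : ∃ M, ∀ t, |t| ≤ T → ‖f t‖ ≤ M := by
  obtain ⟨M, hM⟩ := (isCompact_Icc (a := -T) (b := T)).exists_bound_of_continuousOn hf.continuousOn
  exact ⟨M, fun t ht => hM t (abs_le.1 ht)⟩

section LinearODE

variable {𝔸 : Type*} [NormedRing 𝔸] [NormedAlgebra ℝ 𝔸] {A : ℝ → 𝔸}

/-- The terms of the Dyson series of `A`, i.e. the iterated integrals
`∫₀ᵗ A t₁ ∫₀^{t₁} A t₂ ⋯ ∫₀^{tₙ₋₁} A tₙ`, whose sum solves `L' = A L`, `L 0 = 1`. -/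
noncomputable def dysonTerm (A : ℝ → 𝔸) : ℕ → ℝ → 𝔸
  | 0, _ => 1
  | n + 1, t => ∫ τ in (0 : ℝ)..t, A τ * dysonTerm A n τ

lemma dysonTerm_succ_zero (n : ℕ) : dysonTerm A (n + 1) 0 = 0 :=
  intervalIntegral.integral_same

lemma continuous_dysonTerm (hA : Continuous A) (n : ℕ) : Continuous (dysonTerm A n) := by
  induction n with
  | zero => exact continuous_const
  | succ n ih => exact intervalIntegral.continuous_primitive (hA.mul ih).intervalIntegrable 0

lemma norm_dysonTerm_le {M T : ℝ} (hM : ∀ τ, |τ| ≤ T → ‖A τ‖ ≤ M) (n : ℕ) {t : ℝ}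
    (ht : |t| ≤ T) : ‖dysonTerm A n t‖ ≤ ‖(1 : 𝔸)‖ * ((M * |t|) ^ n / n.factorial) := by
  induction n generalizing t with
  | zero => simp [dysonTerm]
  | succ n ih =>
    set c : ℝ := ‖(1 : 𝔸)‖ * (M ^ (n + 1) / n.factorial) with hc
    have bound : ∀ τ ∈ uIoc 0 t, ‖A τ * dysonTerm A n τ‖ ≤ c * |τ| ^ n := fun τ hτ => by
      have hτT : |τ| ≤ T := by
        simpa using (abs_sub_left_of_mem_uIcc (uIoc_subset_uIcc hτ)).trans (by simpa using ht)
      calc ‖A τ * dysonTerm A n τ‖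
          ≤ M * (‖(1 : 𝔸)‖ * ((M * |τ|) ^ n / n.factorial)) :=
            norm_mul_le_of_le (hM τ hτT) (ih hτT)
        _ = c * |τ| ^ n := by rw [hc]; ring
    calc ‖dysonTerm A (n + 1) t‖ ≤ ∫ τ in uIoc 0 t, c * |τ| ^ n := by
          rw [dysonTerm, intervalIntegral.norm_intervalIntegral_eq]
          exact MeasureTheory.norm_integral_le_of_norm_le
            (Continuous.integrableOn_uIoc (by fun_prop))
            ((MeasureTheory.ae_restrict_mem measurableSet_uIoc).mono bound)
      _ = c * (|t| ^ (n + 1) / (n + 1)) := by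
          rw [MeasureTheory.integral_const_mul]
          simpa using congrArg (c * ·) (integral_pow_abs_sub_uIoc (a := 0) (b := t) (n := n))
      _ = ‖(1 : 𝔸)‖ * ((M * |t|) ^ (n + 1) / (n + 1).factorial) := by
          rw [hc, Nat.factorial_succ]; push_cast; field_simp; ring

variable [CompleteSpace 𝔸]

lemma hasDerivAt_dysonTerm_succ (hA : Continuous A) (n : ℕ) (t : ℝ) :
    HasDerivAt (dysonTerm A (n + 1)) (A t * dysonTerm A n t) t :=
  ((hA.mul (continuous_dysonTerm hA n)).integral_hasStrictDerivAt 0 t).hasDerivAt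

lemma summable_dysonTerm (hA : Continuous A) (t : ℝ) : Summable fun n => dysonTerm A n t := by
  obtain ⟨M, hM⟩ := exists_bound_of_abs_le hA |t|
  exact .of_norm_bounded ((Real.summable_pow_div_factorial _).mul_left _)
    fun n => norm_dysonTerm_le hM n le_rfl

theorem hasDerivAt_tsum_dysonTerm (hA : Continuous A) (t : ℝ) :
    HasDerivAt (fun t => ∑' n, dysonTerm A n t) (A t * ∑' n, dysonTerm A n t) t := by
  have htail : HasDerivAt (fun t => ∑' n, dysonTerm A (n + 1) t)
      (∑' n, A t * dysonTerm A n t) t := by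
    obtain ⟨M, hM⟩ := exists_bound_of_abs_le hA (|t| + 1)
    have hball : ∀ {y : ℝ}, y ∈ ball 0 (|t| + 1) → |y| ≤ |t| + 1 := fun hy =>
      (mem_ball_zero_iff.1 hy).le
    have ht : t ∈ ball (0 : ℝ) (|t| + 1) := by simp
    have hM₀ : 0 ≤ M := (norm_nonneg _).trans (hM t (hball ht))
    have hsum : Summable fun n : ℕ => M * (‖(1 : 𝔸)‖ * ((M * (|t| + 1)) ^ n / n.factorial)) :=
      ((Real.summable_pow_div_factorial (M * (|t| + 1))).mul_left _).mul_left M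
    have hbound : ∀ n, ∀ y ∈ ball (0 : ℝ) (|t| + 1), ‖A y * dysonTerm A n y‖
        ≤ M * (‖(1 : 𝔸)‖ * ((M * (|t| + 1)) ^ n / n.factorial)) := fun n y hy =>
      calc ‖A y * dysonTerm A n y‖
          ≤ M * (‖(1 : 𝔸)‖ * ((M * |y|) ^ n / n.factorial)) :=
            norm_mul_le_of_le (hM y (hball hy)) (norm_dysonTerm_le hM n (hball hy))
        _ ≤ M * (‖(1 : 𝔸)‖ * ((M * (|t| + 1)) ^ n / n.factorial)) := by
            gcongr
            exact hball hy
    exact hasDerivAt_tsum_of_isPreconnected (g := fun n => dysonTerm A (n + 1))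
      (g' := fun n y => A y * dysonTerm A n y) hsum isOpen_ball (convex_ball _ _).isPreconnected
      (fun n y _ => hasDerivAt_dysonTerm_succ hA n y) hbound ht
      ((summable_nat_add_iff 1).2 (summable_dysonTerm hA t)) ht
  rw [← (summable_dysonTerm hA t).tsum_mul_left]
  exact (htail.const_add 1).congr_of_eventuallyEq
    (.of_forall fun t => (summable_dysonTerm hA t).tsum_eq_zero_add)

theorem exists_hasDerivAt_mul_of_continuous (hA : Continuous A) :
    ∃ L : ℝ → 𝔸, L 0 = 1 ∧ ∀ t, HasDerivAt L (A t * L t) t := by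
  refine ⟨fun t => ∑' n, dysonTerm A n t, ?_, hasDerivAt_tsum_dysonTerm hA⟩
  simp only [(summable_dysonTerm hA 0).tsum_eq_zero_add, dysonTerm_succ_zero, tsum_zero, add_zero]
  rfl

end LinearODE

variable {E F : Type*} [NormedAddCommGroup E] [NormedSpace ℝ E] [NormedAddCommGroup F]
  [NormedSpace ℝ F]

lemma eq_of_hasDerivAt_clm_apply {A : ℝ → E →L[ℝ] E} (hA : Continuous A) {f g : ℝ → E}
    (hf : ∀ t, HasDerivAt f (A t (f t)) t) (hg : ∀ t, HasDerivAt g (A t (g t)) t)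
    (h₀ : f 0 = g 0) : f = g := by
  funext t
  obtain ⟨M, hM⟩ := exists_bound_of_abs_le hA (|t| + 1)
  have hlip : ∀ τ ∈ Ioo (-(|t| + 1)) (|t| + 1), LipschitzOnWith M.toNNReal (A τ) univ :=
    fun τ hτ => ((A τ).lipschitz.weaken (NNReal.coe_le_coe.1
      ((hM τ (abs_lt.2 hτ).le).trans M.le_coe_toNNReal))).lipschitzOnWith
  exact ODE_solution_unique_of_mem_Icc hlip (t₀ := 0)
    ⟨by linarith [abs_nonneg t], by positivity⟩
    (fun τ _ => (hf τ).continuousAt.continuousWithinAt) (fun τ _ => hf τ) (fun _ _ => mem_univ _)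
    (fun τ _ => (hg τ).continuousAt.continuousWithinAt) (fun τ _ => hg τ) (fun _ _ => mem_univ _)
    h₀ (abs_le.1 (by linarith [abs_nonneg t]))

lemma exists_norm_image_sub_sub_fderiv_le_of_isCompact {D : E → F} (hD : ContDiff ℝ 1 D)
    {K : Set E} (hK : IsCompact K) {ε : ℝ} (hε : 0 < ε) :
    ∃ r > 0, ∀ p ∈ K, ∀ q, ‖q - p‖ < r → ‖D q - D p - fderiv ℝ D p (q - p)‖ ≤ ε * ‖q - p‖ := by
  have hunif := hK.uniformContinuousAt_of_continuousAt (fderiv ℝ D)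
    (fun p _ => (hD.continuous_fderiv one_ne_zero).continuousAt) (dist_mem_uniformity hε)
  obtain ⟨r, hr, hrε⟩ := mem_uniformity_dist.1 hunif
  refine ⟨r, hr, fun p hp q hq => ?_⟩
  refine (convex_ball p r).norm_image_sub_le_of_norm_fderiv_le' (𝕜 := ℝ)
    (fun y _ => (hD.differentiable one_ne_zero) y) (fun y hy => ?_) (mem_ball_self hr)
    (mem_ball_iff_norm.2 hq)
  rw [← dist_eq_norm, dist_comm]
  exact (hrε (mem_ball'.1 hy) hp).le

/-- The exponent is `K + 1` rather than `K` so that a curve reaching the barrier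
`δ e^{(K + 1) t}` has speed strictly below that of the barrier. -/
lemma norm_le_mul_exp_of_norm_deriv_le {u u' : ℝ → E} {K δ r T : ℝ}
    (hu : ∀ t, HasDerivAt u (u' t) t) (hK : 0 ≤ K) (hδ : 0 < δ) (h₀ : ‖u 0‖ ≤ δ)
    (hr : δ * Real.exp ((K + 1) * T) < r) (bound : ∀ t ∈ Icc 0 T, ‖u t‖ < r → ‖u' t‖ ≤ K * ‖u t‖) :
    ∀ t ∈ Icc 0 T, ‖u t‖ ≤ δ * Real.exp ((K + 1) * t) := by
  have hbarrier : ∀ t, HasDerivAt (fun t => δ * Real.exp ((K + 1) * t))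
      ((K + 1) * (δ * Real.exp ((K + 1) * t))) t := fun t =>
    (((hasDerivAt_id t).const_mul (K + 1)).exp.const_mul δ).congr_deriv (by simp; ring)
  refine image_norm_le_of_norm_deriv_right_lt_deriv_boundary
    (fun t _ => (hu t).continuousAt.continuousWithinAt) (fun t _ => (hu t).hasDerivWithinAt)
    (by simpa using h₀) hbarrier fun t ht htouch => ?_
  have hlt : ‖u t‖ < r := by
    rw [htouch]
    refine lt_of_le_of_lt ?_ hr
    gcongr
    exact ht.2.le
  have hpos : 0 < ‖u t‖ := htouch ▸ by positivity
  rw [← htouch]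
  linarith [bound t (Ico_subset_Icc_self ht) hlt]

lemma gronwallBound_zero_left (K ε t : ℝ) :
    gronwallBound 0 K ε t = ε * gronwallBound 0 K 1 t := by
  simp only [gronwallBound]
  split_ifs <;> ring

/-- `ψ t x` is the value at time `t` of a solution of `γ' = D γ` issued from `x`, defined for all
times. The group law is not part of the definition. -/
structure IsGlobalFlow_s3 (D : E → E) (ψ : ℝ → E → E) : Prop where
  map_zero : ∀ x, ψ 0 x = x
  isIntegralCurve : ∀ x, IsIntegralCurve (fun t => ψ t x) (fun _ => D)

namespace IsGlobalFlow_s3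

variable {D X : E → E} {ψ : ℝ → E → E}

lemma hasDerivAt (hψ : IsGlobalFlow_s3 D ψ) (t : ℝ) (x : E) :
    HasDerivAt (fun τ => ψ τ x) (D (ψ t x)) t :=
  hψ.isIntegralCurve x t

lemma continuous (hψ : IsGlobalFlow_s3 D ψ) (x : E) : Continuous fun t => ψ t x :=
  (hψ.isIntegralCurve x).continuous

lemma reverse (hψ : IsGlobalFlow_s3 D ψ) : IsGlobalFlow_s3 (-D) fun t => ψ (-t) where
  map_zero x := by simpa using hψ.map_zero x
  isIntegralCurve x t := by
    simpa [Function.comp_def] using (hψ.hasDerivAt (-t) x).scomp t (hasDerivAt_neg t)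

lemma continuous_fderiv_orbit (hψ : IsGlobalFlow_s3 D ψ) (hD : ContDiff ℝ 1 D) (x : E) :
    Continuous fun t => fderiv ℝ D (ψ t x) :=
  (hD.continuous_fderiv one_ne_zero).comp (hψ.continuous x)

lemma exists_norm_image_sub_sub_fderiv_orbit_le (hψ : IsGlobalFlow_s3 D ψ) (hD : ContDiff ℝ 1 D)
    (x : E) (T : ℝ) {ε : ℝ} (hε : 0 < ε) :
    ∃ r > 0, ∀ t ∈ Icc 0 T, ∀ y, ‖y - ψ t x‖ < r →
      ‖D y - D (ψ t x) - fderiv ℝ D (ψ t x) (y - ψ t x)‖ ≤ ε * ‖y - ψ t x‖ := by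
  obtain ⟨r, hr, h⟩ := exists_norm_image_sub_sub_fderiv_le_of_isCompact hD
    (isCompact_Icc.image (hψ.continuous x) : IsCompact ((fun t => ψ t x) '' Icc 0 T)) hε
  exact ⟨r, hr, fun t ht => h _ (mem_image_of_mem _ ht)⟩

lemma exists_norm_sub_le (hψ : IsGlobalFlow_s3 D ψ) (hD : ContDiff ℝ 1 D) (x : E) (T : ℝ) :
    ∃ C, ∀ᶠ y in 𝓝 x, ∀ t ∈ Icc 0 T, ‖ψ t y - ψ t x‖ ≤ C * ‖y - x‖ := by
  obtain ⟨r, hr, htaylor⟩ := hψ.exists_norm_image_sub_sub_fderiv_orbit_le hD x T one_pos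
  obtain ⟨M, hM⟩ := exists_bound_of_abs_le (hψ.continuous_fderiv_orbit hD x) T
  refine ⟨Real.exp ((|M| + 1 + 1) * T), ?_⟩
  have hclose : ∀ᶠ y in 𝓝 x, ‖y - x‖ * Real.exp ((|M| + 1 + 1) * T) < r := by
    refine ContinuousAt.eventually_lt (by fun_prop) continuousAt_const ?_
    simpa using hr
  filter_upwards [hclose] with y hy t ht
  rcases eq_or_ne y x with rfl | hyx
  · simp
  have hspeed : ∀ t ∈ Icc 0 T, ‖ψ t y - ψ t x‖ < r →
      ‖D (ψ t y) - D (ψ t x)‖ ≤ (|M| + 1) * ‖ψ t y - ψ t x‖ := fun t ht hlt =>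
    calc ‖D (ψ t y) - D (ψ t x)‖
        ≤ ‖D (ψ t y) - D (ψ t x) - fderiv ℝ D (ψ t x) (ψ t y - ψ t x)‖
          + ‖fderiv ℝ D (ψ t x) (ψ t y - ψ t x)‖ := norm_le_norm_sub_add _ _
      _ ≤ 1 * ‖ψ t y - ψ t x‖ + |M| * ‖ψ t y - ψ t x‖ := by
          refine add_le_add (htaylor t ht _ hlt) (ContinuousLinearMap.le_of_opNorm_le _ ?_ _)
          exact (hM t ((abs_of_nonneg ht.1).trans_le ht.2)).trans (le_abs_self M)
      _ = (|M| + 1) * ‖ψ t y - ψ t x‖ := by ring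
  calc ‖ψ t y - ψ t x‖ ≤ ‖y - x‖ * Real.exp ((|M| + 1 + 1) * t) :=
        norm_le_mul_exp_of_norm_deriv_le
          (fun t => (hψ.hasDerivAt t y).sub (hψ.hasDerivAt t x)) (by positivity)
          (norm_pos_iff.2 (sub_ne_zero.2 hyx)) (by simp [hψ.map_zero]) hy hspeed t ht
    _ ≤ Real.exp ((|M| + 1 + 1) * T) * ‖y - x‖ := by
        rw [mul_comm]
        gcongr
        exact ht.2

lemma norm_sub_sub_le_gronwallBound (hψ : IsGlobalFlow_s3 D ψ) {x y : E} {A L : ℝ → E →L[ℝ] E}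
    (hL₀ : L 0 = 1) (hL : ∀ t, HasDerivAt L (A t * L t) t) {M η T : ℝ} (hT : 0 ≤ T)
    (hM : ∀ t ∈ Icc 0 T, ‖A t‖ ≤ M)
    (hη : ∀ t ∈ Icc 0 T, ‖D (ψ t y) - D (ψ t x) - A t (ψ t y - ψ t x)‖ ≤ η) :
    ‖ψ T y - ψ T x - L T (y - x)‖ ≤ gronwallBound 0 M η T := by
  set w : ℝ → E := fun t => ψ t y - ψ t x - L t (y - x) with hw
  have hderiv : ∀ t, HasDerivAt w (D (ψ t y) - D (ψ t x) - A t (L t (y - x))) t := fun t =>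
    (((hψ.hasDerivAt t y).fun_sub (hψ.hasDerivAt t x)).fun_sub
      ((hL t).clm_apply (hasDerivAt_const t (y - x)))).congr_deriv (by simp)
  have hgrowth : ∀ t ∈ Ico 0 T,
      ‖D (ψ t y) - D (ψ t x) - A t (L t (y - x))‖ ≤ M * ‖w t‖ + η := fun t ht =>
    calc ‖D (ψ t y) - D (ψ t x) - A t (L t (y - x))‖
        = ‖A t (w t) + (D (ψ t y) - D (ψ t x) - A t (ψ t y - ψ t x))‖ := by
          congr 1; simp only [hw, map_sub]; abel
      _ ≤ M * ‖w t‖ + η :=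
          norm_add_le_of_le
            (ContinuousLinearMap.le_of_opNorm_le _ (hM t (Ico_subset_Icc_self ht)) _)
            (hη t (Ico_subset_Icc_self ht))
  calc ‖w T‖ ≤ gronwallBound 0 M η (T - 0) :=
        norm_le_gronwallBound_of_norm_deriv_right_le
          (fun t _ => (hderiv t).continuousAt.continuousWithinAt)
          (fun t _ => (hderiv t).hasDerivWithinAt) (by simp [hw, hψ.map_zero, hL₀]) hgrowth T
          (right_mem_Icc.2 hT)
    _ = gronwallBound 0 M η T := by rw [sub_zero]

lemma hasFDerivAt_of_nonneg (hψ : IsGlobalFlow_s3 D ψ) (hD : ContDiff ℝ 1 D) {x : E}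
    {L : ℝ → E →L[ℝ] E} (hL₀ : L 0 = 1) (hL : ∀ t, HasDerivAt L (fderiv ℝ D (ψ t x) * L t) t)
    {T : ℝ} (hT : 0 ≤ T) : HasFDerivAt (ψ T) (L T) x := by
  obtain ⟨C, hC⟩ := hψ.exists_norm_sub_le hD x T
  obtain ⟨M, hM⟩ := exists_bound_of_abs_le (hψ.continuous_fderiv_orbit hD x) T
  refine .of_isLittleO (Asymptotics.isLittleO_iff.2 fun c hc => ?_)
  obtain ⟨ε, hε, hεc⟩ := exists_pos_mul_lt hc (C * gronwallBound 0 M 1 T)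
  obtain ⟨r, hr, htaylor⟩ := hψ.exists_norm_image_sub_sub_fderiv_orbit_le hD x T hε
  have hclose : ∀ᶠ y in 𝓝 x, C * ‖y - x‖ < r := by
    refine ContinuousAt.eventually_lt (by fun_prop) continuousAt_const ?_
    simpa using hr
  filter_upwards [hC, hclose] with y hyC hyr
  calc ‖ψ T y - ψ T x - L T (y - x)‖ ≤ gronwallBound 0 M (ε * (C * ‖y - x‖)) T := by
        refine hψ.norm_sub_sub_le_gronwallBound hL₀ hL hT
          (fun t ht => hM t ((abs_of_nonneg ht.1).trans_le ht.2)) fun t ht => ?_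
        exact (htaylor t ht _ ((hyC t ht).trans_lt hyr)).trans (by gcongr; exact hyC t ht)
    _ = C * gronwallBound 0 M 1 T * ε * ‖y - x‖ := by rw [gronwallBound_zero_left]; ring
    _ ≤ c * ‖y - x‖ := by gcongr

theorem hasFDerivAt (hψ : IsGlobalFlow_s3 D ψ) (hD : ContDiff ℝ 1 D) {x : E} {L : ℝ → E →L[ℝ] E}
    (hL₀ : L 0 = 1) (hL : ∀ t, HasDerivAt L (fderiv ℝ D (ψ t x) * L t) t) (s : ℝ) :
    HasFDerivAt (ψ s) (L s) x := by
  rcases le_total 0 s with hs | hs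
  · exact hψ.hasFDerivAt_of_nonneg hD hL₀ hL hs
  · have hLneg : ∀ t, HasDerivAt (fun t => L (-t)) (fderiv ℝ (-D) (ψ (-t) x) * L (-t)) t :=
      fun t => by
        simpa [fderiv_neg, Function.comp_def] using (hL (-t)).scomp t (hasDerivAt_neg t)
    simpa using hψ.reverse.hasFDerivAt_of_nonneg hD.neg (by simpa using hL₀) hLneg
      (neg_nonneg.2 hs)

theorem hasDerivAt_fderiv [CompleteSpace E] (hψ : IsGlobalFlow_s3 D ψ) (hD : ContDiff ℝ 1 D)
    (x : E) (t : ℝ) :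
    HasDerivAt (fun τ => fderiv ℝ (ψ τ) x) (fderiv ℝ D (ψ t x) * fderiv ℝ (ψ t) x) t := by
  obtain ⟨L, hL₀, hL⟩ := exists_hasDerivAt_mul_of_continuous (hψ.continuous_fderiv_orbit hD x)
  have hfderiv : (fun τ => fderiv ℝ (ψ τ) x) = L :=
    funext fun τ => (hψ.hasFDerivAt hD hL₀ hL τ).fderiv
  rw [hfderiv, congrFun hfderiv t]
  exact hL t

lemma hasDerivAt_fderiv_apply [CompleteSpace E] (hψ : IsGlobalFlow_s3 D ψ) (hD : ContDiff ℝ 1 D)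
    (x v : E) (t : ℝ) :
    HasDerivAt (fun τ => fderiv ℝ (ψ τ) x v) (fderiv ℝ D (ψ t x) (fderiv ℝ (ψ t) x v)) t := by
  simpa using (hψ.hasDerivAt_fderiv hD x t).clm_apply (hasDerivAt_const t v)

lemma hasDerivAt_exp_neg_integral_smul (hψ : IsGlobalFlow_s3 D ψ) (hX : Differentiable ℝ X)
    {ξ : E → ℝ} (hξ : Continuous ξ) (hbracket : ∀ y, lieBracket ℝ D X y = ξ y • X y) (x : E)
    (t : ℝ) :
    HasDerivAt (fun s => Real.exp (-∫ τ in (0 : ℝ)..s, ξ (ψ τ x)) • X (ψ s x))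
      (fderiv ℝ D (ψ t x) (Real.exp (-∫ τ in (0 : ℝ)..t, ξ (ψ τ x)) • X (ψ t x))) t := by
  have hρ : HasDerivAt (fun s => ∫ τ in (0 : ℝ)..s, ξ (ψ τ x)) (ξ (ψ t x)) t :=
    ((hξ.comp (hψ.continuous x)).integral_hasStrictDerivAt 0 t).hasDerivAt
  have hXψ : HasDerivAt (fun s => X (ψ s x)) (fderiv ℝ X (ψ t x) (D (ψ t x))) t :=
    (hX (ψ t x)).hasFDerivAt.comp_hasDerivAt t (hψ.hasDerivAt t x)
  refine (hρ.fun_neg.exp.fun_smul hXψ).congr_deriv ?_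
  rw [eq_add_of_sub_eq (hbracket (ψ t x)), map_smul]
  module

end IsGlobalFlow_s3

theorem pullback_scaling_of_state_dependent_homogeneous_general [CompleteSpace E] {X D : E → E}
    (hX : Differentiable ℝ X) (hD : ContDiff ℝ 1 D) {ξ : E → ℝ} (hξ : Continuous ξ)
    {ψ : ℝ → E → E} (hψ : IsGlobalFlow_s3 D ψ)
    (hbracket : ∀ y, lieBracket ℝ D X y = ξ y • X y) (s : ℝ) (x : E) :
    X (ψ s x) = Real.exp (∫ τ in (0 : ℝ)..s, ξ (ψ τ x)) • fderiv ℝ (ψ s) x (X x) := by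
  have hψ₀ : ψ 0 = id := funext hψ.map_zero
  have hsol : (fun s => Real.exp (-∫ τ in (0 : ℝ)..s, ξ (ψ τ x)) • X (ψ s x)) =
      fun s => fderiv ℝ (ψ s) x (X x) :=
    eq_of_hasDerivAt_clm_apply (hψ.continuous_fderiv_orbit hD x)
      (hψ.hasDerivAt_exp_neg_integral_smul hX hξ hbracket x)
      (hψ.hasDerivAt_fderiv_apply hD x (X x)) (by simp [hψ₀])
  rw [← congrFun hsol s, smul_smul, ← Real.exp_add, add_neg_cancel, Real.exp_zero, one_smul]

/-- If `[D,X] = ξ·X` pointwise, then the pullback of `X` under the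
dilation flow `ψ_s` scales exponentially:
`X(ψ(s,x)) = e^{ρ(s,x)} · D_x ψ_s(x)[X(x)]` with `ρ(s,x) = ∫₀^s ξ(ψ(τ,x)) dτ`. -/
theorem pullback_scaling_of_state_dependent_homogeneous
    (n : ℕ) (X D : (Fin n → ℝ) → (Fin n → ℝ))
    (hX : ContDiff ℝ (⊤ : ℕ∞) X) (hD : ContDiff ℝ (⊤ : ℕ∞) D)
    (ξ : (Fin n → ℝ) → ℝ) (hξ : ContDiff ℝ (⊤ : ℕ∞) ξ)
    (φ ψ : ℝ → (Fin n → ℝ) → (Fin n → ℝ))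
    (hφ0 : ∀ x, φ 0 x = x)
    (hφ : ∀ (t : ℝ) (x : Fin n → ℝ), HasDerivAt (fun τ => φ τ x) (X (φ t x)) t)
    (hψ0 : ∀ x, ψ 0 x = x)
    (hψ : ∀ (s : ℝ) (x : Fin n → ℝ), HasDerivAt (fun τ => ψ τ x) (D (ψ s x)) s)
    (hbracket : ∀ x, fderiv ℝ X x (D x) - fderiv ℝ D x (X x) = ξ x • X x)
    (ρ : ℝ → (Fin n → ℝ) → ℝ)
    (hρ : ∀ (s : ℝ) (x : Fin n → ℝ), ρ s x = ∫ τ in (0:ℝ)..s, ξ (ψ τ x)) :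
    ∀ (s : ℝ) (x : Fin n → ℝ),
      X (ψ s x) = Real.exp (ρ s x) • (fderiv ℝ (fun y => ψ s y) x) (X x) := by
  intro s x
  simpa only [hρ] using pullback_scaling_of_state_dependent_homogeneous_general
    (hX.differentiable (by simp)) (hD.of_le (by simp)) hξ.continuous ⟨hψ0, fun x s => hψ s x⟩
    hbracket s x
end

section
/- Let f̂ : ℝⁿ × ℝⁿ → ℝⁿ be smooth and suppose the combined state-error vector field Z(x,e) = (f̂(x,e), −f̂(x,e)) on ℝ^{2n} is homogeneous of degree ζ with respect to the standard dilation, i.e. there is r > 0 such that Z(λ^r x, λ^r e) = λ^{ζ+r}·Z(x,e) for all λ > 0 and (x,e) ∈ ℝ^{2n}. Suppose Z admits a global flow, with components denoted (φ^x(t,x₀,e₀), φ^e(t,x₀,e₀)). For c > 0, define the inter-execution time τ(x₀) := inf{t > 0 : |φ^e(t,x₀,0)| = c·|φ^x(t,x₀,0)|}. Then for all λ > 0 and x ∈ ℝⁿ, the set {t > 0 : |φ^e(t, λ^r x, 0)| = c·|φ^x(t, λ^r x, 0)|} equals {λ^{−ζ}·t : t > 0, |φ^e(t, x, 0)| = c·|φ^x(t,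 x, 0)|}; consequently τ(λ^r x) = λ^{−ζ}·τ(x). -/
/-!
If a linear map `L` carries a vector field `v` to `w` up to the factor `m`, then it carries
trajectories of `v`, run at speed `m`, to trajectories of `w`; uniqueness of trajectories turns this
into a relation between the flows. For a homogeneous field, `L` is the dilation by `λ ^ r` and
`m = λ ^ ζ`, so dilating the initial state rescales time by `λ ^ (-ζ)`. The triggering set
`‖e‖ = c * ‖x‖` is a cone, so a dilated trajectory meets it at the rescaled times.
-/

open Set

section IntegralCurves

variable {E F : Type*} [NormedAddCommGroup E] [NormedSpace ℝ E]
  [NormedAddCommGroup F] [NormedSpace ℝ F]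

theorem isIntegralCurve_eq_of_locallyLipschitz {v : E → E} (hv : LocallyLipschitz v)
    {γ δ : ℝ → E} (hγ : IsIntegralCurve γ fun _ ↦ v) (hδ : IsIntegralCurve δ fun _ ↦ v)
    {t₀ : ℝ} (h : γ t₀ = δ t₀) : γ = δ := by
  funext t
  obtain ⟨a, b, ht, ht₀⟩ : ∃ a b, t ∈ Ioo a b ∧ t₀ ∈ Ioo a b :=
    ⟨min t t₀ - 1, max t t₀ + 1, by grind, by grind⟩
  have traces_compact : IsCompact (γ '' Icc a b ∪ δ '' Icc a b) :=
    (isCompact_Icc.image hγ.continuous).union (isCompact_Icc.image hδ.continuous)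
  obtain ⟨K, hK⟩ := hv.locallyLipschitzOn.exists_lipschitzOnWith_of_compact traces_compact
  exact ODE_solution_unique_of_mem_Ioo (fun _ _ ↦ hK) ht₀
    (fun s hs ↦ ⟨hγ s, .inl (mem_image_of_mem γ (Ioo_subset_Icc_self hs))⟩)
    (fun s hs ↦ ⟨hδ s, .inr (mem_image_of_mem δ (Ioo_subset_Icc_self hs))⟩) h ht

theorem isIntegralCurve_clm_comp_mul {v : E → E} {w : F → F} (L : E →L[ℝ] F) {m : ℝ}
    (hL : ∀ z, w (L z) = m • L (v z)) {γ : ℝ → E} (hγ : IsIntegralCurve γ fun _ ↦ v) :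
    IsIntegralCurve (fun t ↦ L (γ (t * m))) fun _ ↦ w := fun t ↦ by
  simpa [hL, Function.comp_def] using L.hasFDerivAt.comp_hasDerivAt t (hγ.comp_mul m t)

/-- `φ t z` is the value at time `t` of the global flow of the autonomous vector field `v` started
at `z`. -/
structure IsGlobalFlow_s5 (v : E → E) (φ : ℝ → E → E) : Prop where
  map_zero (z : E) : φ 0 z = z
  isIntegralCurve (z : E) : IsIntegralCurve (φ · z) fun _ ↦ v

theorem IsGlobalFlow_s5.apply_clm {v : E → E} {w : F → F} {φ : ℝ → E → E} {ψ : ℝ → F → F}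
    (hφ : IsGlobalFlow_s5 v φ) (hψ : IsGlobalFlow_s5 w ψ) (hw : LocallyLipschitz w)
    (L : E →L[ℝ] F) {m : ℝ} (hL : ∀ z, w (L z) = m • L (v z)) (t : ℝ) (z : E) :
    ψ t (L z) = L (φ (t * m) z) :=
  congrFun (isIntegralCurve_eq_of_locallyLipschitz hw (hψ.isIntegralCurve (L z))
    (isIntegralCurve_clm_comp_mul L hL (hφ.isIntegralCurve z)) (t₀ := 0)
    (by simp [hφ.map_zero, hψ.map_zero])) t

end IntegralCurves

section InfimumScaling

theorem ereal_mul_sInf {a : EReal} (ha : 0 < a) (ha' : a ≠ ⊤) (s : Set EReal) :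
    a * sInf s = sInf ((a * ·) '' s) := by
  have gc : GaloisConnection (· / a) (a * ·) := fun _ _ ↦ EReal.div_le_iff_le_mul ha ha'
  rw [sInf_image]
  exact gc.u_sInf

theorem ereal_sInf_coe_image_mul {a : ℝ} (ha : 0 < a) (s : Set ℝ) :
    sInf ((fun t : ℝ ↦ (t : EReal)) '' ((fun t ↦ a * t) '' s)) =
      a * sInf ((fun t : ℝ ↦ (t : EReal)) '' s) := by
  rw [ereal_mul_sInf (EReal.coe_pos.2 ha) (EReal.coe_ne_top a), image_image, image_image]
  simp only [EReal.coe_mul]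

end InfimumScaling

section Homogeneous

variable {E : Type*} [NormedAddCommGroup E] [NormedSpace ℝ E]

/-- Homogeneity of degree `ζ` of a vector field with respect to the standard dilation
`z ↦ λ ^ r • z`. The degree is shifted by `r`, so that a linear field has degree `0`. -/
def IsHomogeneousField (v : E → E) (ζ r : ℝ) : Prop :=
  ∀ lam : ℝ, 0 < lam → ∀ z, v (lam ^ r • z) = lam ^ (ζ + r) • v z

/-- The positive times at which the trajectory of `φ` started at `z` lies in `A`. -/
def hittingTimes (φ : ℝ → E → E) (A : Set E) (z : E) : Set ℝ :=
  {t | 0 < t ∧ φ t z ∈ A}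

/-- The infimum of the hitting times, taken in `EReal` so that it is `⊤` when `A` is never hit. -/
noncomputable def firstHittingTime (φ : ℝ → E → E) (A : Set E) (z : E) : EReal :=
  sInf ((fun t : ℝ ↦ (t : EReal)) '' hittingTimes φ A z)

variable {v : E → E} {φ : ℝ → E → E} {ζ r lam : ℝ} {A : Set E}

theorem IsGlobalFlow_s5.apply_rpow_smul (hφ : IsGlobalFlow_s5 v φ) (hv : LocallyLipschitz v)
    (hhom : IsHomogeneousField v ζ r) (hlam : 0 < lam) (t : ℝ) (z : E) :
    φ t (lam ^ r • z) = lam ^ r • φ (t * lam ^ ζ) z :=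
  hφ.apply_clm hφ hv (lam ^ r • ContinuousLinearMap.id ℝ E)
    (fun z ↦ by simp [hhom lam hlam, Real.rpow_add hlam, mul_smul]) t z

theorem IsGlobalFlow_s5.hittingTimes_rpow_smul (hφ : IsGlobalFlow_s5 v φ) (hv : LocallyLipschitz v)
    (hhom : IsHomogeneousField v ζ r) (hA : ∀ k : ℝ, 0 < k → ∀ z, k • z ∈ A ↔ z ∈ A)
    (hlam : 0 < lam) (z : E) :
    hittingTimes φ A (lam ^ r • z) = (fun t ↦ lam ^ (-ζ) * t) '' hittingTimes φ A z := by
  have hζ : 0 < lam ^ ζ := Real.rpow_pos_of_pos hlam ζ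
  have mem_iff (t : ℝ) : t ∈ hittingTimes φ A (lam ^ r • z) ↔ lam ^ ζ * t ∈ hittingTimes φ A z := by
    simp only [hittingTimes, mem_ofPred_eq, hφ.apply_rpow_smul hv hhom hlam,
      hA _ (Real.rpow_pos_of_pos hlam r), mul_pos_iff_of_pos_left hζ, mul_comm t]
  rw [Real.rpow_neg hlam.le]
  exact ext fun t ↦ (mem_iff t).trans (mem_inv_smul_set_iff₀ hζ.ne' _ t).symm

theorem IsGlobalFlow_s5.firstHittingTime_rpow_smul (hφ : IsGlobalFlow_s5 v φ) (hv : LocallyLipschitz v)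
    (hhom : IsHomogeneousField v ζ r) (hA : ∀ k : ℝ, 0 < k → ∀ z, k • z ∈ A ↔ z ∈ A)
    (hlam : 0 < lam) (z : E) :
    firstHittingTime φ A (lam ^ r • z) = ((lam ^ (-ζ) : ℝ) : EReal) * firstHittingTime φ A z := by
  rw [firstHittingTime, hφ.hittingTimes_rpow_smul hv hhom hA hlam,
    ereal_sInf_coe_image_mul (Real.rpow_pos_of_pos hlam _), firstHittingTime]

end Homogeneous

section StateError

variable {E : Type*} [NormedAddCommGroup E]

/-- The combined field `Z(x, e) = (f̂(x, e), -f̂(x, e))` of the state and the measurement error: the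
error is the last sampled state minus the current one, so the two move oppositely. -/
def stateErrorField (fhat : E × E → E) (z : E × E) : E × E :=
  (fhat z, -fhat z)

/-- The set of pairs `(x, e)` at which the rule `|e| = c|x|` calls for an execution. -/
def triggeringSet (E : Type*) [NormedAddCommGroup E] (c : ℝ) : Set (E × E) :=
  {z | ‖z.2‖ = c * ‖z.1‖}

theorem locallyLipschitz_stateErrorField {fhat : E × E → E} (hf : LocallyLipschitz fhat) :
    LocallyLipschitz (stateErrorField fhat) :=
  hf.prodMk hf.neg

variable [NormedSpace ℝ E]

theorem isHomogeneousField_stateErrorField {fhat : E × E → E} {ζ r : ℝ}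
    (hhom : ∀ lam : ℝ, 0 < lam → ∀ x e : E,
      fhat (lam ^ r • x, lam ^ r • e) = lam ^ (ζ + r) • fhat (x, e)) :
    IsHomogeneousField (stateErrorField fhat) ζ r := fun lam hlam z ↦ by
  simp only [stateErrorField, Prod.smul_def, hhom lam hlam, Prod.mk.eta, smul_neg]

theorem smul_mem_triggeringSet_iff {c k : ℝ} (hk : k ≠ 0) (z : E × E) :
    k • z ∈ triggeringSet E c ↔ z ∈ triggeringSet E c := by
  simp only [triggeringSet, mem_ofPred_eq, Prod.smul_snd, Prod.smul_fst, norm_smul,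
    mul_left_comm c, mul_right_inj' (norm_ne_zero_iff.2 hk)]

theorem inter_execution_times_scaling_homogeneous_general {fhat : E × E → E}
    (hf : LocallyLipschitz fhat) {ζ r : ℝ} (hhom : IsHomogeneousField (stateErrorField fhat) ζ r)
    {φ : ℝ → E × E → E × E} (hφ : IsGlobalFlow_s5 (stateErrorField fhat) φ)
    (c : ℝ) {lam : ℝ} (hlam : 0 < lam) (x : E) :
    hittingTimes φ (triggeringSet E c) (lam ^ r • x, 0) =
        (fun t ↦ lam ^ (-ζ) * t) '' hittingTimes φ (triggeringSet E c) (x, 0) ∧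
      firstHittingTime φ (triggeringSet E c) (lam ^ r • x, 0) =
        ((lam ^ (-ζ) : ℝ) : EReal) * firstHittingTime φ (triggeringSet E c) (x, 0) := by
  have hZ := locallyLipschitz_stateErrorField hf
  have triggering_cone (k : ℝ) (hk : 0 < k) := smul_mem_triggeringSet_iff (E := E) (c := c) hk.ne'
  have dilate_init : (lam ^ r • x, (0 : E)) = lam ^ r • (x, (0 : E)) := by simp
  rw [dilate_init]
  exact ⟨hφ.hittingTimes_rpow_smul hZ hhom triggering_cone hlam _,
    hφ.firstHittingTime_rpow_smul hZ hhom triggering_cone hlam _⟩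

end StateError

/-- For a smooth `f̂` whose combined state-error vector field
`Z(x,e) = (f̂(x,e), −f̂(x,e))` is homogeneous of degree `ζ` w.r.t. the standard dilation
(`Z(λ^r x, λ^r e) = λ^{ζ+r} Z(x,e)`), the inter-execution times defined by the rule
`|e| = c|x|` scale as `τ(λ^r x) = λ^{−ζ} τ(x)`. -/
theorem inter_execution_times_scaling_homogeneous
    (n : ℕ)
    (fhat : EuclideanSpace ℝ (Fin n) × EuclideanSpace ℝ (Fin n) → EuclideanSpace ℝ (Fin n))
    (hf : ContDiff ℝ (⊤ : ℕ∞) fhat)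
    (ζ r : ℝ) (hr : 0 < r)
    (hhom : ∀ lam : ℝ, 0 < lam →
      ∀ x e : EuclideanSpace ℝ (Fin n),
        fhat (lam ^ r • x, lam ^ r • e) = lam ^ (ζ + r) • fhat (x, e))
    (φ : ℝ → EuclideanSpace ℝ (Fin n) × EuclideanSpace ℝ (Fin n) →
      EuclideanSpace ℝ (Fin n) × EuclideanSpace ℝ (Fin n))
    (hφ0 : ∀ z, φ 0 z = z)
    (hφ : ∀ (t : ℝ) (z : EuclideanSpace ℝ (Fin n) × EuclideanSpace ℝ (Fin n)),
      HasDerivAt (fun τ => φ τ z) (fhat (φ t z), -fhat (φ t z)) t)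
    (c : ℝ) (hc : 0 < c)
    (S : EuclideanSpace ℝ (Fin n) → Set ℝ)
    (hS : ∀ x, S x = {t : ℝ | 0 < t ∧ ‖(φ t (x, 0)).2‖ = c * ‖(φ t (x, 0)).1‖})
    (τ : EuclideanSpace ℝ (Fin n) → EReal)
    (hτ : ∀ x, τ x = sInf ((fun t : ℝ => (t : EReal)) '' S x))
    (lam : ℝ) (hlam : 0 < lam) (x : EuclideanSpace ℝ (Fin n)) :
    S (lam ^ r • x) = (fun t : ℝ => lam ^ (-ζ) * t) '' S x ∧
      τ (lam ^ r • x) = ((lam ^ (-ζ) : ℝ) : EReal) * τ x := by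
  obtain rfl : S = fun x ↦ hittingTimes φ (triggeringSet _ c) (x, 0) := funext hS
  obtain rfl : τ = fun x ↦ firstHittingTime φ (triggeringSet _ c) (x, 0) := funext hτ
  exact inter_execution_times_scaling_homogeneous_general
    (hf.of_le (mod_cast le_top)).locallyLipschitz (isHomogeneousField_stateErrorField hhom)
    ⟨hφ0, fun z t ↦ hφ t z⟩ c hlam x
end

section
/- Let f : ℝⁿ × ℝ^m → ℝⁿ and k : ℝⁿ → ℝ^m be continuous, let V : ℝⁿ → ℝ be continuously differentiable, let α and γ be class K∞ functions, and suppose that for all x, e ∈ ℝⁿ: ∇V(x)·f(x, k(x+e)) ≤ −α(|x|) + γ(|e|). Let 0 < σ < 1 and let x : [0,T] → ℝⁿ and e : [0,T] → ℝⁿ be such that x is differentiable with ẋ(t) = f(x(t), k(x(t)+e(t))) and γ(|e(t)|) ≤ σ·α(|x(t)|) for all t ∈ [0,T]. Then for all t ∈ [0,T], the function t ↦ V(x(t)) is differentiable with derivative at most (σ−1)·α(|x(t)|); in particular V(x(t)) is nonincreasing on [0,T]. -/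
theorem antitoneOn_of_hasDerivWithinAt_self_nonpos {s : Set ℝ} (hs : Convex ℝ s) {g g' : ℝ → ℝ}
    (hg : ∀ t ∈ s, HasDerivWithinAt g (g' t) s t) (hg' : ∀ t ∈ interior s, g' t ≤ 0) :
    AntitoneOn g s :=
  antitoneOn_of_hasDerivWithinAt_nonpos hs (fun t ht => (hg t ht).continuousWithinAt)
    (fun t ht => (hg t (interior_subset ht)).mono interior_subset) hg'

theorem nonneg_of_monotoneOn_Ici {α : ℝ → ℝ} (hα : MonotoneOn α (Set.Ici 0)) (hα0 : α 0 = 0)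
    {r : ℝ} (hr : 0 ≤ r) : 0 ≤ α r :=
  hα0 ▸ hα Set.self_mem_Ici hr hr

theorem lyapunov_decrease_under_triggering_general {E U : Type*} [NormedAddCommGroup E]
    [NormedSpace ℝ E] {f : E → U → E} {k : E → U} {V : E → ℝ} (hV : Differentiable ℝ V)
    {α γ : ℝ → ℝ} (hα : ∀ r, 0 ≤ r → 0 ≤ α r)
    (hISS : ∀ x e : E, fderiv ℝ V x (f x (k (x + e))) ≤ -α ‖x‖ + γ ‖e‖)
    {σ : ℝ} (hσ : σ ≤ 1) {s : Set ℝ} (hs : Convex ℝ s) {x e : ℝ → E}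
    (hx : ∀ t ∈ s, HasDerivWithinAt x (f (x t) (k (x t + e t))) s t)
    (htrig : ∀ t ∈ s, γ ‖e t‖ ≤ σ * α ‖x t‖) :
    (∀ t ∈ s,
      HasDerivWithinAt (fun τ => V (x τ)) (fderiv ℝ V (x t) (f (x t) (k (x t + e t)))) s t ∧
        fderiv ℝ V (x t) (f (x t) (k (x t + e t))) ≤ (σ - 1) * α ‖x t‖) ∧
      AntitoneOn (fun t => V (x t)) s := by
  have chain_rule : ∀ t ∈ s, HasDerivWithinAt (fun τ => V (x τ))
      (fderiv ℝ V (x t) (f (x t) (k (x t + e t)))) s t :=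
    fun t ht => (hV (x t)).hasFDerivAt.comp_hasDerivWithinAt t (hx t ht)
  have decay : ∀ t ∈ s, fderiv ℝ V (x t) (f (x t) (k (x t + e t))) ≤ (σ - 1) * α ‖x t‖ :=
    fun t ht => calc
      fderiv ℝ V (x t) (f (x t) (k (x t + e t))) ≤ -α ‖x t‖ + γ ‖e t‖ := hISS (x t) (e t)
      _ ≤ -α ‖x t‖ + σ * α ‖x t‖ := by grw [htrig t ht]
      _ = (σ - 1) * α ‖x t‖ := by ring
  have rate_nonpos (y : E) : (σ - 1) * α ‖y‖ ≤ 0 :=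
    mul_nonpos_of_nonpos_of_nonneg (sub_nonpos.2 hσ) (hα ‖y‖ (norm_nonneg y))
  exact ⟨fun t ht => ⟨chain_rule t ht, decay t ht⟩,
    antitoneOn_of_hasDerivWithinAt_self_nonpos hs chain_rule
      fun t ht => (decay t (interior_subset ht)).trans (rate_nonpos (x t))⟩

/-- If `V` is an ISS Lyapunov function satisfying
`∇V(x)·f(x,k(x+e)) ≤ −α(|x|) + γ(|e|)` for class `K∞` functions `α, γ`, and along a
trajectory the triggering condition `γ(|e(t)|) ≤ σ α(|x(t)|)` holds with `0 < σ < 1`,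
then `t ↦ V(x(t))` is differentiable with derivative at most `(σ−1)α(|x(t)|) ≤ 0`;
in particular it is nonincreasing on `[0,T]`. -/
theorem lyapunov_decrease_under_triggering
    (n m : ℕ)
    (f : EuclideanSpace ℝ (Fin n) → EuclideanSpace ℝ (Fin m) → EuclideanSpace ℝ (Fin n))
    (k : EuclideanSpace ℝ (Fin n) → EuclideanSpace ℝ (Fin m))
    (hf : Continuous fun p : EuclideanSpace ℝ (Fin n) × EuclideanSpace ℝ (Fin m) =>
      f p.1 p.2)
    (hk : Continuous k)
    (V : EuclideanSpace ℝ (Fin n) → ℝ) (hV : ContDiff ℝ 1 V)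
    (α γ : ℝ → ℝ)
    (hα : ContinuousOn α (Set.Ici 0) ∧ StrictMonoOn α (Set.Ici 0) ∧ α 0 = 0 ∧
      Filter.Tendsto α Filter.atTop Filter.atTop)
    (hγ : ContinuousOn γ (Set.Ici 0) ∧ StrictMonoOn γ (Set.Ici 0) ∧ γ 0 = 0 ∧
      Filter.Tendsto γ Filter.atTop Filter.atTop)
    (hISS : ∀ x e : EuclideanSpace ℝ (Fin n),
      fderiv ℝ V x (f x (k (x + e))) ≤ -α ‖x‖ + γ ‖e‖)
    (σ : ℝ) (hσ0 : 0 < σ) (hσ1 : σ < 1)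
    (T : ℝ) (hT : 0 ≤ T)
    (x e : ℝ → EuclideanSpace ℝ (Fin n))
    (hx : ∀ t ∈ Set.Icc 0 T,
      HasDerivWithinAt x (f (x t) (k (x t + e t))) (Set.Icc 0 T) t)
    (htrig : ∀ t ∈ Set.Icc 0 T, γ ‖e t‖ ≤ σ * α ‖x t‖) :
    (∀ t ∈ Set.Icc 0 T,
      HasDerivWithinAt (fun τ => V (x τ)) (fderiv ℝ V (x t) (f (x t) (k (x t + e t))))
          (Set.Icc 0 T) t ∧
        fderiv ℝ V (x t) (f (x t) (k (x t + e t))) ≤ (σ - 1) * α ‖x t‖) ∧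
      AntitoneOn (fun t => V (x t)) (Set.Icc 0 T) :=
  lyapunov_decrease_under_triggering_general (hV.differentiable one_ne_zero)
    (fun _ => nonneg_of_monotoneOn_Ici hα.2.1.monotoneOn hα.2.2.1) hISS hσ1.le (convex_Icc 0 T)
    hx htrig
end
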